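/- First reduction step exact for general q (Fmac_arg_reduct_correct2): Assume p > 3, q is an integer with 2 ≤ q < p − 1, x is a p-bit FPN, R is a positive normal p-bit FPN, C₁ is a round-to-nearest of 1/R to p − q bits, C₁ is not exactly a power of 2, C₁ ≥ 2^(p−q+max(1,N−1))·λ, 2^(−N) is a p-bit FPN, |x·R| ≤ 2^(p−N−2) − 2^(−N), z₀ is a round-to-nearest of 3·2^(p−N−2) + x·R to p bits, z is a round-to-nearest of z₀ − 3·2^(p−N−2) to p bits, and R·C₁ ≤ 1. Then x − z·C₁ is a p-bit FPN. -/

import Mathlib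

noncomputable section

/-- `x` is a `k`-bit (binary) floating-point number with minimal exponent `emin`:
there exist integers `m`, `e` with `|m| < 2^k`, `e ≥ emin` and `x = m·2^e`. -/
def IsFPN (emin k : ℤ) (x : ℝ) : Prop :=
  ∃ m e : ℤ, |(m : ℝ)| < (2 : ℝ) ^ k ∧ emin ≤ e ∧ x = (m : ℝ) * (2 : ℝ) ^ e

/-- `x` is a normal `p`-bit floating-point number: it admits a representation
with `2^(p-1) ≤ |m| < 2^p`. -/
def IsNormalFPN (emin p : ℤ) (x : ℝ) : Prop :=
  ∃ m e : ℤ, (2 : ℝ) ^ (p - 1) ≤ |(m : ℝ)| ∧ |(m : ℝ)| < (2 : ℝ) ^ p ∧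
    emin ≤ e ∧ x = (m : ℝ) * (2 : ℝ) ^ e

/-- `r` is a round-to-nearest of `a` to `k` bits (ties broken in any way). -/
def RN (emin k : ℤ) (a r : ℝ) : Prop :=
  IsFPN emin k r ∧ ∀ y : ℝ, IsFPN emin k y → |a - r| ≤ |a - y|

/-- Unit in the last place at precision `p`: `ulp(x) = 2^(⌊log₂|x|⌋ - p + 1)`. -/
def ulp (p : ℤ) (x : ℝ) : ℝ := (2 : ℝ) ^ (Int.log 2 |x| - p + 1)

/-- Integer multiples of `2 ^ e` that are smaller than `2 ^ (k + e)` are `k`-bit numbers. -/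
theorem isFPN_intCast_mul_zpow {emin k m e : ℤ} (he : emin ≤ e)
    (hm : |(m : ℝ) * (2 : ℝ) ^ e| < (2 : ℝ) ^ (k + e)) : IsFPN emin k ((m : ℝ) * (2 : ℝ) ^ e) := by
  have h2 : (0 : ℝ) < (2 : ℝ) ^ e := by positivity
  refine ⟨m, e, ?_, he, rfl⟩
  rw [abs_mul, abs_of_pos h2, zpow_add₀ two_ne_zero] at hm
  exact lt_of_mul_lt_mul_right hm h2.le

/-- A coarser power of two is an integer multiple of a finer one. -/
theorem exists_intCast_mul_zpow {e g : ℤ} (h : g ≤ e) :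
    ∃ n : ℤ, (2 : ℝ) ^ e = (n : ℝ) * (2 : ℝ) ^ g := by
  refine ⟨2 ^ (e - g).toNat, ?_⟩
  push_cast
  rw [← zpow_natCast, Int.toNat_of_nonneg (by lia), ← zpow_add₀ two_ne_zero]
  congr 1
  lia

/-- The difference of two integer multiples of powers of two is representable as soon as it is
small with respect to both powers. -/
theorem isFPN_sub {emin k m e n g : ℤ} (he : emin ≤ e) (hg : emin ≤ g)
    (h₁ : |(m : ℝ) * (2 : ℝ) ^ e - (n : ℝ) * (2 : ℝ) ^ g| < (2 : ℝ) ^ (k + e))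
    (h₂ : |(m : ℝ) * (2 : ℝ) ^ e - (n : ℝ) * (2 : ℝ) ^ g| < (2 : ℝ) ^ (k + g)) :
    IsFPN emin k ((m : ℝ) * (2 : ℝ) ^ e - (n : ℝ) * (2 : ℝ) ^ g) := by
  rcases le_total e g with h | h
  · obtain ⟨i, hi⟩ := exists_intCast_mul_zpow h
    have key : (m : ℝ) * (2 : ℝ) ^ e - (n : ℝ) * (2 : ℝ) ^ g
        = ((m - n * i : ℤ) : ℝ) * (2 : ℝ) ^ e := by
      rw [hi]; push_cast; ring
    rw [key] at h₁ ⊢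
    exact isFPN_intCast_mul_zpow he h₁
  · obtain ⟨i, hi⟩ := exists_intCast_mul_zpow h
    have key : (m : ℝ) * (2 : ℝ) ^ e - (n : ℝ) * (2 : ℝ) ^ g
        = ((m * i - n : ℤ) : ℝ) * (2 : ℝ) ^ g := by
      rw [hi]; push_cast; ring
    rw [key] at h₂ ⊢
    exact isFPN_intCast_mul_zpow hg h₂

/-- A number that is representable is its own rounding. -/
theorem RN.eq_of_isFPN {emin k : ℤ} {a r : ℝ} (h : RN emin k a r) (ha : IsFPN emin k a) :
    r = a := by
  have := h.2 a ha
  rw [sub_self, abs_zero] at this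
  linarith [abs_nonpos_iff.mp this]

/-- A representable power of two has exponent at least `emin`. -/
theorem le_of_isFPN_zpow {emin k j : ℤ} (h : IsFPN emin k ((2 : ℝ) ^ j)) : emin ≤ j := by
  obtain ⟨m, e, -, he, hm⟩ := h
  have h2 : (0 : ℝ) < (2 : ℝ) ^ e := by positivity
  have hpos : (0 : ℝ) < (m : ℝ) * (2 : ℝ) ^ e := hm ▸ by positivity
  have hm1 : (1 : ℝ) ≤ m := by
    have : (0 : ℝ) < m := pos_of_mul_pos_left hpos h2.le
    exact_mod_cast this
  have : (2 : ℝ) ^ e ≤ (2 : ℝ) ^ j := by rw [hm]; nlinarith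
  exact he.trans ((zpow_le_zpow_iff_right₀ one_lt_two).mp this)

/-- Adding and subtracting `3 * 2 ^ (p - N - 2)` rounds a moderate real `y` to a nearest integer
multiple of `2 ^ (-N)`. -/
theorem exists_intCast_of_RN_add_sub {emin p N : ℤ} {y z₀ z : ℝ} (hp : 2 ≤ p) (hN : emin ≤ -N)
    (hy : |y| ≤ (2 : ℝ) ^ (p - N - 2) - (2 : ℝ) ^ (-N))
    (hz₀ : RN emin p (3 * (2 : ℝ) ^ (p - N - 2) + y) z₀)
    (hz : RN emin p (z₀ - 3 * (2 : ℝ) ^ (p - N - 2)) z) :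
    ∃ k : ℤ, z = (k : ℝ) * (2 : ℝ) ^ (-N) ∧ |y - z| ≤ (2 : ℝ) ^ (-N) / 2 := by
  obtain ⟨P, hP⟩ := exists_intCast_mul_zpow (show -N ≤ p - N - 2 by lia)
  have ht : (0 : ℝ) < (2 : ℝ) ^ (-N) := by positivity
  have hpP : (2 : ℝ) ^ (p + -N) = 4 * (P * (2 : ℝ) ^ (-N)) := by
    rw [← hP, show p + -N = (p - N - 2) + 2 by ring, zpow_add₀ two_ne_zero]
    norm_num [mul_comm]
  rw [hP] at hy hz₀ hz
  set t : ℝ := (2 : ℝ) ^ (-N) with htdef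
  obtain ⟨hy₁, hy₂⟩ := abs_le.mp hy
  have hround : |y - round (y / t) * t| ≤ t / 2 := by
    have h := abs_sub_round (y / t)
    have : y - round (y / t) * t = (y / t - round (y / t)) * t := by field_simp
    rw [this, abs_mul, abs_of_pos ht]
    nlinarith
  have hclose : |y - (z₀ - 3 * (P * t))| ≤ t / 2 := by
    obtain ⟨h₁, h₂⟩ := abs_le.mp hround
    have hfp : IsFPN emin p (((3 * P + round (y / t) : ℤ) : ℝ) * t) := by
      refine isFPN_intCast_mul_zpow hN ?_
      rw [← htdef, hpP, abs_lt]
      push_cast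
      constructor <;> nlinarith
    have h := hz₀.2 _ hfp
    push_cast at h
    rw [show 3 * (P * t) + y - (3 * P + round (y / t)) * t = y - round (y / t) * t by ring,
      show 3 * (P * t) + y - z₀ = y - (z₀ - 3 * (P * t)) by ring] at h
    exact h.trans hround
  obtain ⟨h₁, h₂⟩ := abs_le.mp hclose
  obtain ⟨⟨m, e, hm, -, hz₀e⟩, -⟩ := hz₀
  have h2e : (0 : ℝ) < (2 : ℝ) ^ e := by positivity
  have hNe : -N ≤ e := by
    have hlt : (2 : ℝ) ^ (p + -N - 1) < (2 : ℝ) ^ (p + e) := by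
      have hm' : z₀ < (2 : ℝ) ^ p * (2 : ℝ) ^ e := by
        rw [hz₀e]
        exact mul_lt_mul_of_pos_right ((le_abs_self _).trans_lt hm) h2e
      rw [zpow_sub₀ two_ne_zero, hpP, zpow_add₀ two_ne_zero]
      norm_num
      linarith
    have := (zpow_lt_zpow_iff_right₀ one_lt_two).mp hlt
    lia
  obtain ⟨i, hi⟩ := exists_intCast_mul_zpow hNe
  have hdiff : z₀ - 3 * (P * t) = ((m * i - 3 * P : ℤ) : ℝ) * t := by
    rw [hz₀e, hi]; push_cast; ring
  have hzeq : z = z₀ - 3 * (P * t) := by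
    refine hz.eq_of_isFPN ?_
    rw [hdiff]
    refine isFPN_intCast_mul_zpow hN ?_
    rw [← htdef, ← hdiff, hpP, abs_lt]
    constructor <;> linarith
  exact ⟨m * i - 3 * P, hzeq.trans hdiff, hzeq ▸ hclose⟩

/-- If a rounding lies below the rounded number, the error is at most half of the spacing given by
any of its representations. -/
theorem RN.sub_le_of_le {emin k c f : ℤ} {a : ℝ} (hk : 0 < k) (hf : emin ≤ f)
    (h : RN emin k a ((c : ℝ) * (2 : ℝ) ^ f)) (hc₀ : 0 ≤ (c : ℝ)) (hc : (c : ℝ) < (2 : ℝ) ^ k)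
    (hle : (c : ℝ) * (2 : ℝ) ^ f ≤ a) : a - (c : ℝ) * (2 : ℝ) ^ f ≤ (2 : ℝ) ^ f / 2 := by
  have h2 : (0 : ℝ) < (2 : ℝ) ^ f := by positivity
  obtain ⟨K, hK⟩ := exists_intCast_mul_zpow hk.le
  rw [zpow_zero, mul_one] at hK
  have hcK : c + 1 ≤ K := by rw [hK] at hc; exact_mod_cast hc
  have hsucc : IsFPN emin k (((c + 1 : ℤ) : ℝ) * (2 : ℝ) ^ f) := by
    rcases hcK.lt_or_eq with hlt | heq
    · have hlt' : ((c + 1 : ℤ) : ℝ) < K := by exact_mod_cast hlt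
      refine ⟨c + 1, f, ?_, hf, rfl⟩
      rw [hK, abs_of_nonneg (by push_cast; linarith)]
      exact hlt'
    · refine ⟨1, k + f, ?_, by lia, ?_⟩
      · rw [Int.cast_one, abs_one]
        exact one_lt_zpow₀ one_lt_two hk
      · rw [heq, ← hK, zpow_add₀ two_ne_zero, Int.cast_one, one_mul]
  have hmin := h.2 _ hsucc
  push_cast at hmin
  rw [abs_of_nonneg (by linarith)] at hmin
  rcases abs_cases (a - ((c : ℝ) + 1) * (2 : ℝ) ^ f) with ⟨h', _⟩ | ⟨h', _⟩ <;>
    rw [h'] at hmin <;> linarith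

/-- First reduction step exact for general `q` (Fmac_arg_reduct_correct2). -/
theorem Fmac_arg_reduct_correct2 (p emin N q : ℤ) (hp : 3 < p)
    (hq1 : 2 ≤ q) (hq2 : q < p - 1)
    (x R C₁ z₀ z : ℝ)
    (hx : IsFPN emin p x)
    (hRpos : 0 < R) (hRnorm : IsNormalFPN emin p R)
    (hC₁ : RN emin (p - q) (1 / R) C₁)
    (hC₁pow : ∀ j : ℤ, C₁ ≠ (2 : ℝ) ^ j)
    (hC₁big : (2 : ℝ) ^ (p - q + max 1 (N - 1)) * (2 : ℝ) ^ emin ≤ C₁)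
    (hN : IsFPN emin p ((2 : ℝ) ^ (-N)))
    (hxR : |x * R| ≤ (2 : ℝ) ^ (p - N - 2) - (2 : ℝ) ^ (-N))
    (hz₀ : RN emin p (3 * (2 : ℝ) ^ (p - N - 2) + x * R) z₀)
    (hz : RN emin p (z₀ - 3 * (2 : ℝ) ^ (p - N - 2)) z)
    (hRC₁ : R * C₁ ≤ 1) :
    IsFPN emin p (x - z * C₁) := by
  obtain ⟨k, hzk, hzx⟩ :=
    exists_intCast_of_RN_add_sub (by lia) (le_of_isFPN_zpow hN) hxR hz₀ hz
  have ht : (0 : ℝ) < (2 : ℝ) ^ (-N) := by positivity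
  rcases eq_or_ne k 0 with rfl | hk
  · simpa [hzk] using hx
  have hC₁pos : 0 < C₁ := lt_of_lt_of_le (by positivity) hC₁big
  have hC₁le : C₁ ≤ 1 / R := by rw [le_div_iff₀ hRpos]; linarith
  obtain ⟨⟨c, f, hc, hf, hcf⟩, -⟩ := id hC₁
  have h2f : (0 : ℝ) < (2 : ℝ) ^ f := by positivity
  have hcpos : (0 : ℝ) < c := pos_of_mul_pos_left (hcf ▸ hC₁pos) h2f.le
  rw [abs_of_pos hcpos] at hc
  have hfN : emin + N ≤ f := by
    have hlt : (2 : ℝ) ^ (p - q + max 1 (N - 1) + emin) < (2 : ℝ) ^ (p - q + f) := by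
      rw [zpow_add₀ two_ne_zero, zpow_add₀ two_ne_zero (p - q) f]
      refine hC₁big.trans_lt ?_
      rw [hcf]
      exact mul_lt_mul_of_pos_right hc h2f
    have := (zpow_lt_zpow_iff_right₀ one_lt_two).mp hlt
    have := le_max_right 1 (N - 1)
    lia
  have herr : 1 / R - C₁ ≤ (2 : ℝ) ^ f / 2 := by
    rw [hcf] at hC₁ hC₁le ⊢
    exact hC₁.sub_le_of_le (by lia) hf hcpos.le hc hC₁le
  obtain ⟨m, e, hm, he, hxm⟩ := hx
  have hzabs : (2 : ℝ) ^ (-N) ≤ |z| := by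
    have : (1 : ℝ) ≤ |(k : ℝ)| := by exact_mod_cast Int.one_le_abs hk
    rw [hzk, abs_mul, abs_of_pos ht]
    nlinarith
  -- Rounding to a nonzero multiple of `2 ^ (-N)` keeps the sign and at most doubles.
  have hle_x : |x - z * C₁| ≤ |x| := by
    obtain ⟨h₁, h₂⟩ := abs_le.mp hzx
    have hRC₀ : 0 < R * C₁ := by positivity
    rcases abs_cases z with ⟨ha, _⟩ | ⟨ha, _⟩ <;> rw [ha] at hzabs
    · have hxpos : 0 ≤ x := by
        by_contra! hneg
        nlinarith
      have hz2 : z * C₁ ≤ 2 * (x * R) * C₁ := by gcongr; linarith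
      have hx1 : x * (R * C₁) ≤ x := mul_le_of_le_one_right hxpos hRC₁
      have : 0 ≤ z * C₁ := by positivity
      rw [abs_of_nonneg hxpos, abs_le]
      constructor <;> nlinarith
    · have hxneg : x ≤ 0 := by
        by_contra! hpos
        nlinarith
      have hz2 : 2 * (x * R) * C₁ ≤ z * C₁ := by gcongr; linarith
      have hx1 : x ≤ x * (R * C₁) := by nlinarith
      have : z * C₁ ≤ 0 := by nlinarith
      rw [abs_of_nonpos hxneg, abs_le]
      constructor <;> nlinarith
  have hlt_f : |x - z * C₁| < (2 : ℝ) ^ (p + (f - N)) := by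
    have hdecomp : x - z * C₁ = (x * R - z) * (1 / R) + z * (1 / R - C₁) := by
      field_simp
      ring
    have hRinv : 1 / R < (2 : ℝ) ^ (p - q) * (2 : ℝ) ^ f := by
      obtain ⟨K, hK⟩ := exists_intCast_mul_zpow (show 0 ≤ p - q by lia)
      rw [zpow_zero, mul_one] at hK
      have hcK : (c : ℝ) + 1 ≤ K := by rw [hK] at hc; exact_mod_cast hc
      rw [hK]
      nlinarith
    have hpq : (2 : ℝ) ^ (p - q) ≤ (2 : ℝ) ^ p :=
      zpow_le_zpow_right₀ one_le_two (by lia)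
    have hzle : |z| ≤ (2 : ℝ) ^ p * (2 : ℝ) ^ (-N) := by
      have hle : (2 : ℝ) ^ (p - N - 2) ≤ (2 : ℝ) ^ (p + -N) :=
        zpow_le_zpow_right₀ one_le_two (by lia)
      rw [zpow_add₀ two_ne_zero p (-N)] at hle
      have := abs_sub_abs_le_abs_sub z (x * R)
      rw [abs_sub_comm z] at this
      linarith
    have hR₀ : 0 < 1 / R := by positivity
    calc |x - z * C₁|
        ≤ |x * R - z| * (1 / R) + |z| * (1 / R - C₁) := by
          rw [hdecomp]
          refine (abs_add_le _ _).trans_eq ?_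
          rw [abs_mul, abs_mul, abs_of_pos hR₀, abs_of_nonneg (sub_nonneg.mpr hC₁le)]
      _ ≤ (2 : ℝ) ^ (-N) / 2 * (1 / R)
            + (2 : ℝ) ^ p * (2 : ℝ) ^ (-N) * ((2 : ℝ) ^ f / 2) := by
          have := sub_nonneg.mpr hC₁le
          gcongr
      _ < (2 : ℝ) ^ (-N) / 2 * ((2 : ℝ) ^ p * (2 : ℝ) ^ f)
            + (2 : ℝ) ^ p * (2 : ℝ) ^ (-N) * ((2 : ℝ) ^ f / 2) := by
          gcongr
          exact hRinv.trans_le (by gcongr)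
      _ = (2 : ℝ) ^ (p + (f - N)) := by
          rw [show p + (f - N) = p + f + -N by ring, zpow_add₀ two_ne_zero, zpow_add₀ two_ne_zero]
          ring
  have hzC : z * C₁ = ((k * c : ℤ) : ℝ) * (2 : ℝ) ^ (f - N) := by
    rw [hzk, hcf, show f - N = -N + f by ring, zpow_add₀ two_ne_zero]
    push_cast
    ring
  have hlt_e : |x - z * C₁| < (2 : ℝ) ^ (p + e) := by
    refine hle_x.trans_lt ?_
    rw [hxm, abs_mul, abs_of_pos (by positivity : (0 : ℝ) < (2 : ℝ) ^ e), zpow_add₀ two_ne_zero]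
    exact mul_lt_mul_of_pos_right hm (by positivity)
  rw [hzC, hxm] at hlt_e hlt_f ⊢
  exact isFPN_sub he (by lia) hlt_e hlt_f
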